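/- arXiv:2110.06418 — 3 statements merged into one kernel-verified Lean document; each statement's English description precedes it below -/
import Mathlib

section
/- Suppose Q ⪰ I and R is positive semidefinite. The series Σ_{t=0}^∞ γ^t · tr(((A+BK)^t)ᵀ (Q + KᵀRK) (A+BK)^t) converges (i.e. the γ-discounted LQR cost averaged over the sphere is finite) if and only if √γ·(A + BK) is stable, i.e. its spectral radius is strictly less than 1. -/
open Matrix

/-- A real square matrix is stable if every complex eigenvalue has modulus `< 1`. -/
def IsStable {n : ℕ} (M : Matrix (Fin n) (Fin n) ℝ) : Prop :=
  ∀ μ ∈ spectrum ℂ (M.map Complex.ofReal), ‖μ‖ < 1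

/-!
A positive definite weight factors as `P = Sᴴ S` with `S` invertible, so the `t`-th cost is the
squared Frobenius norm `‖S Mᵗ‖²` once `√γ` has been absorbed into `M`. Multiplication by `S` changes
norms by bounded factors only, so the cost is finite iff `∑ ‖Mᵗ‖²` is. In a complex Banach algebra
this happens exactly when the spectrum lies in the open unit disc: if the powers tend to zero then
so does `|μ|ᵗ ≤ ‖Mᵗ‖ ‖1‖` for each spectral value `μ`, and conversely Gelfand's formula makes `‖Mᵗ‖`
decay geometrically.
-/

open Filter Topology
open scoped NNReal ENNReal ComplexOrder MatrixOrder

lemma summable_norm_mul_left_pow_iff {ι A : Type*} [SeminormedRing A] {u : A} (hu : IsUnit u)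
    (x : ι → A) (p : ℕ) :
    Summable (fun i => ‖u * x i‖ ^ p) ↔ Summable (fun i => ‖x i‖ ^ p) := by
  have summable_mul (v : A) {y : ι → A} (hy : Summable fun i => ‖y i‖ ^ p) :
      Summable fun i => ‖v * y i‖ ^ p := by
    refine (hy.mul_left (‖v‖ ^ p)).of_nonneg_of_le (fun i => by positivity) fun i => ?_
    rw [← mul_pow]
    gcongr
    exact norm_mul_le v (y i)
  obtain ⟨u, rfl⟩ := hu
  exact ⟨fun h => by simpa using summable_mul ↑u⁻¹ h, summable_mul u⟩

section BanachAlgebra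

variable {A : Type*} [NormedRing A] [CompleteSpace A]

lemma norm_lt_one_of_mem_spectrum_of_tendsto_pow {𝕜 : Type*} [NormedField 𝕜] [NormedAlgebra 𝕜 A]
    {a : A} (ha : Tendsto (fun t : ℕ => a ^ t) atTop (𝓝 0)) {μ : 𝕜} (hμ : μ ∈ spectrum 𝕜 a) :
    ‖μ‖ < 1 := by
  have norm_pow_le (t : ℕ) : ‖μ‖ ^ t ≤ ‖a ^ t‖ * ‖(1 : A)‖ := by
    rw [← norm_pow]
    exact spectrum.norm_le_norm_mul_of_mem (spectrum.pow_mem_pow a t hμ)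
  have bound_tendsto : Tendsto (fun t : ℕ => ‖a ^ t‖ * ‖(1 : A)‖) atTop (𝓝 0) := by
    simpa using ha.norm.mul_const ‖(1 : A)‖
  have pow_tendsto := squeeze_zero (fun t => by positivity) norm_pow_le bound_tendsto
  simpa using tendsto_pow_atTop_nhds_zero_iff.1 pow_tendsto

variable [NormedAlgebra ℂ A] {a : A}

lemma eventually_norm_pow_le_of_spectralRadius_lt {r : ℝ≥0} (hr : spectralRadius ℂ a < r) :
    ∀ᶠ t : ℕ in atTop, ‖a ^ t‖ ≤ r ^ t := by
  filter_upwards [(spectrum.gelfand_formula a).eventually_lt_const hr, eventually_gt_atTop 0]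
    with t root_lt t_pos
  have norm_le : (‖a ^ t‖₊ : ℝ≥0∞) ≤ (r : ℝ≥0∞) ^ (t : ℝ) :=
    (ENNReal.rpow_inv_le_iff (by positivity)).1 (by simpa using root_lt.le)
  exact_mod_cast norm_le

lemma spectralRadius_lt_one_of_forall_norm_lt_one (ha : ∀ μ ∈ spectrum ℂ a, ‖μ‖ < 1) :
    spectralRadius ℂ a < 1 := by
  cases subsingleton_or_nontrivial A
  · simp
  · exact_mod_cast spectrum.spectralRadius_lt_of_forall_lt a fun μ hμ => (ha μ hμ : ‖μ‖₊ < 1)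

theorem summable_norm_pow_pow_iff_forall_norm_lt_one {p : ℕ} (hp : p ≠ 0) :
    Summable (fun t : ℕ => ‖a ^ t‖ ^ p) ↔ ∀ μ ∈ spectrum ℂ a, ‖μ‖ < 1 := by
  constructor
  · intro h μ hμ
    have norm_tendsto : Tendsto (fun t : ℕ => ‖a ^ t‖) atTop (𝓝 0) := by
      simpa [← Real.rpow_natCast, Real.rpow_rpow_inv, hp] using
        h.tendsto_atTop_zero.rpow_const (p := (p : ℝ)⁻¹) (by simp)
    exact norm_lt_one_of_mem_spectrum_of_tendsto_pow
      (tendsto_zero_iff_norm_tendsto_zero.2 norm_tendsto) hμ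
  · intro h
    obtain ⟨r, radius_lt, r_lt_one⟩ :=
      ENNReal.lt_iff_exists_nnreal_btwn.1 (spectralRadius_lt_one_of_forall_norm_lt_one h)
    have geometric : Summable fun t : ℕ => ((r : ℝ) ^ p) ^ t :=
      summable_geometric_of_lt_one (by positivity)
        (pow_lt_one₀ r.coe_nonneg (by exact_mod_cast r_lt_one) hp)
    refine geometric.of_norm_bounded_eventually_nat ?_
    filter_upwards [eventually_norm_pow_le_of_spectralRadius_lt radius_lt] with t norm_le
    rw [norm_pow, norm_norm, pow_right_comm]
    gcongr

end BanachAlgebra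

section PosDef

variable {m n 𝕜 : Type*} [RCLike 𝕜]

lemma posDef_of_sub_one_posSemidef [DecidableEq n] {Q : Matrix n n 𝕜} (hQ : (Q - 1).PosSemidef) :
    Q.PosDef := by
  simpa using PosDef.one.add_posSemidef hQ

lemma posDef_add_conjTranspose_mul_mul_same [Fintype m] [Finite n] {Q : Matrix n n 𝕜}
    {R : Matrix m m 𝕜} (hQ : Q.PosDef) (hR : R.PosSemidef) (K : Matrix m n 𝕜) :
    (Q + Kᴴ * R * K).PosDef :=
  hQ.add_posSemidef (hR.conjTranspose_mul_mul_same K)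

end PosDef

section Frobenius

attribute [local instance] Matrix.frobeniusNormedAddCommGroup Matrix.frobeniusNormedRing
  Matrix.frobeniusNormedAlgebra

variable {m n 𝕜 : Type*} [Fintype m] [Fintype n] [RCLike 𝕜]

lemma trace_conjTranspose_mul_self_eq_frobenius_norm_sq (N : Matrix m n 𝕜) :
    (Nᴴ * N).trace = ((‖N‖ ^ 2 : ℝ) : 𝕜) := by
  rw [frobenius_norm_def, ← Real.sqrt_eq_rpow, Real.sq_sqrt (by positivity), Finset.sum_comm]
  simp [Matrix.trace, Matrix.mul_apply, RCLike.conj_mul]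

variable [DecidableEq n]

lemma summable_trace_conjTranspose_mul_mul_iff {ι : Type*} {P : Matrix n n 𝕜} (hP : P.PosDef)
    (N : ι → Matrix n n 𝕜) :
    Summable (fun i => ((N i)ᴴ * P * N i).trace) ↔ Summable (fun i => ‖N i‖ ^ 2) := by
  obtain ⟨S, hS, rfl⟩ := CStarAlgebra.isStrictlyPositive_iff_eq_star_mul_self.1
    hP.isStrictlyPositive
  have trace_eq (i : ι) : ((N i)ᴴ * (star S * S) * N i).trace = ((‖S * N i‖ ^ 2 : ℝ) : 𝕜) := by
    rw [← trace_conjTranspose_mul_self_eq_frobenius_norm_sq, conjTranspose_mul]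
    simp only [star_eq_conjTranspose, Matrix.mul_assoc]
  simp only [trace_eq, RCLike.summable_ofReal, summable_norm_mul_left_pow_iff hS]

lemma summable_frobenius_norm_pow_sq_iff (M : Matrix n n ℝ) :
    Summable (fun t : ℕ => ‖M ^ t‖ ^ 2) ↔
      ∀ μ ∈ spectrum ℂ (M.map Complex.ofReal), ‖μ‖ < 1 := by
  have norm_map_pow (t : ℕ) : ‖M.map Complex.ofReal ^ t‖ = ‖M ^ t‖ := by
    rw [← frobenius_norm_map_eq (M ^ t) Complex.ofReal Complex.norm_real]
    exact congrArg norm (Matrix.map_pow M Complex.ofRealHom t).symm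
  simpa only [norm_map_pow] using
    summable_norm_pow_pow_iff_forall_norm_lt_one (a := M.map Complex.ofReal) two_ne_zero

lemma pow_mul_trace_eq_trace_sqrt_smul {γ : ℝ} (hγ : 0 ≤ γ) (M P : Matrix n n ℝ) (t : ℕ) :
    γ ^ t * ((M ^ t)ᵀ * P * M ^ t).trace = (((√γ • M) ^ t)ᵀ * P * (√γ • M) ^ t).trace := by
  simp [smul_pow, ← mul_assoc, ← mul_pow, Real.mul_self_sqrt hγ]

theorem lqr_cost_finite_iff_stable_general {M P : Matrix n n ℝ} (hP : P.PosDef) {γ : ℝ}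
    (hγ : 0 ≤ γ) :
    Summable (fun t : ℕ => γ ^ t * ((M ^ t)ᵀ * P * M ^ t).trace) ↔
      ∀ μ ∈ spectrum ℂ ((√γ • M).map Complex.ofReal), ‖μ‖ < 1 := by
  simp only [pow_mul_trace_eq_trace_sqrt_smul hγ]
  simp only [← conjTranspose_eq_transpose_of_trivial]
  rw [summable_trace_conjTranspose_mul_mul_iff hP, summable_frobenius_norm_pow_sq_iff]

end Frobenius

/-- With `Q ⪰ I` and `R ⪰ 0`, the averaged `γ`-discounted LQR cost
`Σ_t γ^t tr(((A+BK)^t)ᵀ (Q + KᵀRK) (A+BK)^t)` is finite (the series is summable)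
if and only if `√γ·(A + BK)` is stable. -/
theorem lqr_cost_finite_iff_stable {d m : ℕ}
    (A : Matrix (Fin d) (Fin d) ℝ) (B : Matrix (Fin d) (Fin m) ℝ)
    (Q : Matrix (Fin d) (Fin d) ℝ) (R : Matrix (Fin m) (Fin m) ℝ)
    (hQ : (Q - 1).PosSemidef) (hR : R.PosSemidef)
    (K : Matrix (Fin m) (Fin d) ℝ) (γ : ℝ) (hγ : γ ∈ Set.Ioc (0 : ℝ) 1) :
    Summable (fun t : ℕ =>
        γ ^ t * (((A + B * K) ^ t)ᵀ * (Q + Kᵀ * R * K) * (A + B * K) ^ t).trace)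
    ↔ IsStable (Real.sqrt γ • (A + B * K)) :=
  lqr_cost_finite_iff_stable_general
    (posDef_add_conjTranspose_mul_mul_same (posDef_of_sub_one_posSemidef hQ) hR K) hγ.1.le
end

section
/- Let A ∈ ℝ^{d×d} be a stable matrix (spectral radius < 1), let Q ⪰ I, and let P be the unique solution of the Lyapunov equation P = Q + Aᵀ P A. Then for every matrix Δ ∈ ℝ^{d×d} with ‖Δ‖_op ≤ 1/(6‖P‖_op²), it holds for all integers j ≥ 0 that ((A + Δ)ᵀ)^j P (A + Δ)^j ⪯ (1 − 1/(2‖P‖_op))^j · P. In particular A + Δ is stable. -/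
/-!
`A` is stable iff `A ^ j → 0`: one direction is Gelfand's formula, the other the spectral mapping
theorem for powers. Hence `AᵀPA ⪯ P` iterates to `(A ^ j)ᵀ P A ^ j ⪯ P`, whose left side tends to
`0`, so `P ⪰ 0` and then `P ⪰ I`. Young's inequality in the form induced by `P`,
`(A + Δ)ᵀP(A + Δ) ⪯ (1 + t) AᵀPA + (1 + t⁻¹) ΔᵀPΔ` with `t = 1 / (6‖P‖)`, together with
`AᵀPA ⪯ P - I` and `P ⪯ ‖P‖ I`, bounds `(A + Δ)ᵀP(A + Δ)` by `P - I / 2 ⪯ (1 - 1 / (2‖P‖)) P`.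
Iterating this gives the decay of `((A + Δ) ^ j)ᵀ P (A + Δ) ^ j`, and since `P ⪰ I` this
dominates `‖(A + Δ) ^ j‖ ^ 2`, so `A + Δ` is stable.
-/

open Matrix

/-- Euclidean operator norm of a real matrix. -/
noncomputable def opNorm {p q : ℕ} (M : Matrix (Fin p) (Fin q) ℝ) : ℝ :=
  ‖LinearMap.toContinuousLinearMap (Matrix.toEuclideanLin M)‖

open Filter Topology

section StarOrderedRing

variable {R : Type*}

theorem star_pow_mul_mul_pow_le_smul {𝕜 : Type*} [CommSemiring 𝕜] [Preorder 𝕜] [PosMulMono 𝕜]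
    [ZeroLEOneClass 𝕜] [Semiring R] [StarRing R] [PartialOrder R] [StarOrderedRing R]
    [Algebra 𝕜 R] [PosSMulMono 𝕜 R] {a p : R} {c : 𝕜} (hc : 0 ≤ c)
    (h : star a * p * a ≤ c • p) (j : ℕ) : star a ^ j * p * a ^ j ≤ c ^ j • p := by
  induction j with
  | zero => simp
  | succ j ih =>
    calc star a ^ (j + 1) * p * a ^ (j + 1)
        = star a * (star a ^ j * p * a ^ j) * a := by
          rw [pow_succ', pow_succ]
          simp only [mul_assoc]
      _ ≤ star a * (c ^ j • p) * a := star_left_conjugate_le_conjugate ih a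
      _ = c ^ j • (star a * p * a) := by rw [mul_smul_comm, smul_mul_assoc]
      _ ≤ c ^ j • c • p := smul_le_smul_of_nonneg_left h (pow_nonneg hc j)
      _ = c ^ (j + 1) • p := by rw [smul_smul, pow_succ]

theorem nonneg_of_star_mul_mul_le [Semiring R] [StarRing R] [PartialOrder R] [StarOrderedRing R]
    [TopologicalSpace R] [ContinuousMul R] [ContinuousStar R] [ClosedIicTopology R] {a p : R}
    (ha : Tendsto (a ^ ·) atTop (𝓝 0)) (h : star a * p * a ≤ p) : 0 ≤ p := by
  have hlim : Tendsto (fun j : ℕ ↦ star a ^ j * p * a ^ j) atTop (𝓝 0) := by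
    simpa using (ha.star.mul_const p).mul ha
  have h_one : star a * p * a ≤ (1 : ℕ) • p := by rwa [one_smul]
  exact le_of_tendsto' hlim fun j ↦ by
    simpa using star_pow_mul_mul_pow_le_smul zero_le_one h_one j

theorem one_le_of_one_add_star_mul_mul_le [Semiring R] [StarRing R] [PartialOrder R]
    [StarOrderedRing R] {a p : R} (hp : 0 ≤ p) (h : 1 + star a * p * a ≤ p) : 1 ≤ p :=
  (le_add_of_nonneg_right (star_left_conjugate_nonneg hp a)).trans h

theorem star_add_mul_mul_add_le [Ring R] [StarRing R] [PartialOrder R] [StarOrderedRing R]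
    [Algebra ℝ R] [StarModule ℝ R] {p : R} (hp : 0 ≤ p) (a d : R) {t : ℝ} (ht : 0 < t) :
    star (a + d) * p * (a + d) ≤
      (1 + t) • (star a * p * a) + (1 + t⁻¹) • (star d * p * d) := by
  have hsq : 0 ≤ t⁻¹ • (star (t • a - d) * p * (t • a - d)) :=
    smul_nonneg (inv_nonneg.2 ht.le) (star_left_conjugate_nonneg hp _)
  rw [← sub_nonneg]
  convert hsq using 1
  simp only [star_add, star_sub, star_smul, star_trivial, add_mul, mul_add, sub_mul, mul_sub,
    smul_mul_assoc, mul_smul_comm]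
  match_scalars <;> field_simp <;> ring

end StarOrderedRing

theorem one_add_mul_mul_sq_le {x y : ℝ} (hx : 1 ≤ x) (hy : 0 ≤ y) (hxy : y ≤ 1 / (6 * x ^ 2)) :
    (1 + 6 * x) * (x * y ^ 2) ≤ 7 / 36 := by
  have hmul : x * y ≤ 1 / 6 := by
    calc x * y ≤ x * (1 / (6 * x ^ 2)) := by gcongr
      _ = 1 / 6 * (1 / x) := by field_simp
      _ ≤ 1 / 6 := mul_le_of_le_one_right (by norm_num) ((div_le_one (by positivity)).2 hx)
  calc (1 + 6 * x) * (x * y ^ 2) ≤ (x + 6 * x) * (x * y ^ 2) := by gcongr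
    _ = 7 * (x * y) ^ 2 := by ring
    _ ≤ 7 * (1 / 6) ^ 2 := by gcongr
    _ = 7 / 36 := by norm_num

section RealCStarAlgebra

/- Mathlib's `CStarAlgebra` is complex. These assumptions are what complex C⋆-algebras share with
real matrices under the Euclidean operator norm and the Loewner order. -/
variable {R : Type*} [NormedRing R] [StarRing R] [NormedAlgebra ℝ R] [PartialOrder R]
  [StarOrderedRing R] [IsometricContinuousFunctionalCalculus ℝ R IsSelfAdjoint]

theorem le_algebraMap_norm_of_isSelfAdjoint {a : R} (ha : IsSelfAdjoint a) :
    a ≤ algebraMap ℝ R ‖a‖ :=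
  le_algebraMap_of_spectrum_le fun x hx ↦
    (Real.le_norm_self x).trans (IsometricContinuousFunctionalCalculus.norm_spectrum_le a hx)

theorem norm_le_norm_of_nonneg_of_le [NonnegSpectrumClass ℝ R] {a b : R} (ha : 0 ≤ a)
    (hab : a ≤ b) : ‖a‖ ≤ ‖b‖ := by
  nontriviality R
  obtain ⟨x, hx, hxa⟩ :=
    (IsometricContinuousFunctionalCalculus.isGreatest_norm_spectrum (𝕜 := ℝ) a).1
  have hb : a ≤ algebraMap ℝ R ‖b‖ :=
    hab.trans (le_algebraMap_norm_of_isSelfAdjoint (.of_nonneg (ha.trans hab)))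
  calc ‖a‖ = ‖x‖ := hxa.symm
    _ = x := Real.norm_of_nonneg (spectrum_nonneg_of_nonneg ha hx)
    _ ≤ ‖b‖ := (le_algebraMap_iff_spectrum_le (.of_nonneg ha)).1 hb x hx

theorem norm_smul_le_algebraMap_half [StarModule ℝ R] {p : R} (hp : IsSelfAdjoint p) :
    (1 / (2 * ‖p‖)) • p ≤ algebraMap ℝ R (1 / 2) := by
  have hscalar : 1 / (2 * ‖p‖) * ‖p‖ ≤ 1 / 2 := by
    calc 1 / (2 * ‖p‖) * ‖p‖ = 1 / 2 * (‖p‖ / ‖p‖) := by ring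
      _ ≤ 1 / 2 := mul_le_of_le_one_right (by norm_num) (div_self_le_one ‖p‖)
  calc (1 / (2 * ‖p‖)) • p ≤ (1 / (2 * ‖p‖)) • algebraMap ℝ R ‖p‖ :=
        smul_le_smul_of_nonneg_left (le_algebraMap_norm_of_isSelfAdjoint hp) (by positivity)
    _ = algebraMap ℝ R (1 / (2 * ‖p‖) * ‖p‖) := by rw [map_mul, Algebra.smul_def]
    _ ≤ algebraMap ℝ R (1 / 2) := algebraMap_mono R hscalar

variable [CStarRing R]

theorem star_mul_self_le_algebraMap_norm_sq (a : R) :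
    star a * a ≤ algebraMap ℝ R (‖a‖ ^ 2) := by
  simpa [CStarRing.norm_star_mul_self, sq] using
    le_algebraMap_norm_of_isSelfAdjoint (IsSelfAdjoint.star_mul_self a)

theorem star_mul_mul_le_algebraMap_norm_mul_norm_sq [StarModule ℝ R] {p : R}
    (hp : IsSelfAdjoint p) (d : R) : star d * p * d ≤ algebraMap ℝ R (‖p‖ * ‖d‖ ^ 2) := by
  calc star d * p * d ≤ star d * algebraMap ℝ R ‖p‖ * d :=
        star_left_conjugate_le_conjugate (le_algebraMap_norm_of_isSelfAdjoint hp) d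
    _ = ‖p‖ • (star d * d) := by
        rw [Algebra.algebraMap_eq_smul_one, mul_smul_one, smul_mul_assoc]
    _ ≤ ‖p‖ • algebraMap ℝ R (‖d‖ ^ 2) :=
        smul_le_smul_of_nonneg_left (star_mul_self_le_algebraMap_norm_sq d) (norm_nonneg p)
    _ = algebraMap ℝ R (‖p‖ * ‖d‖ ^ 2) := by rw [map_mul, Algebra.smul_def]

variable [NonnegSpectrumClass ℝ R]

theorem one_le_norm_of_one_le [Nontrivial R] {p : R} (hp : 1 ≤ p) : 1 ≤ ‖p‖ := by
  simpa using norm_le_norm_of_nonneg_of_le zero_le_one hp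

theorem orderClosedTopology_of_isometricContinuousFunctionalCalculus :
    OrderClosedTopology R := by
  refine ⟨isClosed_le_of_isClosed_nonneg (IsSeqClosed.isClosed fun u a hu hua ↦ ?_)⟩
  have hu_sa (n : ℕ) : IsSelfAdjoint (u n) := .of_nonneg (hu n)
  have ha : IsSelfAdjoint a :=
    (isClosed_eq continuous_star continuous_id).mem_of_tendsto hua (.of_forall hu_sa)
  have hlower (n : ℕ) : algebraMap ℝ R (-‖u n - a‖) ≤ a := by
    have hle := le_algebraMap_norm_of_isSelfAdjoint ((hu_sa n).sub ha)
    rw [map_neg, neg_le_iff_add_nonneg']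
    exact (hu n).trans (sub_le_iff_le_add.1 hle)
  have hlim : Tendsto (fun n ↦ -‖u n - a‖) atTop (𝓝 0) := by
    simpa using (hua.sub_const a).norm.neg
  exact (StarOrderedRing.nonneg_iff_spectrum_nonneg (R := ℝ) a ha).2 fun x hx ↦
    le_of_tendsto' hlim fun n ↦ (algebraMap_le_iff_le_spectrum ha).1 (hlower n) x hx

variable [StarModule ℝ R]

theorem tendsto_pow_of_star_mul_mul_le_smul {b p : R} {c : ℝ} (hp : 1 ≤ p) (hc₀ : 0 ≤ c)
    (hc₁ : c < 1) (h : star b * p * b ≤ c • p) : Tendsto (b ^ ·) atTop (𝓝 0) := by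
  have hle (j : ℕ) : star (b ^ j) * b ^ j ≤ c ^ j • p := by
    calc star (b ^ j) * b ^ j = star (b ^ j) * 1 * b ^ j := by rw [mul_one]
      _ ≤ star (b ^ j) * p * b ^ j := star_left_conjugate_le_conjugate hp _
      _ = star b ^ j * p * b ^ j := by rw [star_pow]
      _ ≤ c ^ j • p := star_pow_mul_mul_pow_le_smul hc₀ h j
  have hnorm (j : ℕ) : ‖b ^ j‖ ^ 2 ≤ c ^ j * ‖p‖ := by
    calc ‖b ^ j‖ ^ 2 = ‖star (b ^ j) * b ^ j‖ := by rw [CStarRing.norm_star_mul_self, sq]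
      _ ≤ ‖c ^ j • p‖ := norm_le_norm_of_nonneg_of_le (star_mul_self_nonneg _) (hle j)
      _ = c ^ j * ‖p‖ := norm_smul_of_nonneg (pow_nonneg hc₀ j) p
  have hsq : Tendsto (fun j ↦ ‖b ^ j‖ ^ 2) atTop (𝓝 0) :=
    squeeze_zero (fun _ ↦ sq_nonneg _) hnorm <| by
      simpa using (tendsto_pow_atTop_nhds_zero_of_lt_one hc₀ hc₁).mul_const ‖p‖
  rw [tendsto_zero_iff_norm_tendsto_zero]
  simpa using hsq.sqrt

theorem star_add_mul_mul_add_le_sub_algebraMap_half {a p d : R} (hp : 0 ≤ p)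
    (hap : 1 + star a * p * a ≤ p) (hd : ‖d‖ ≤ 1 / (6 * ‖p‖ ^ 2)) :
    star (a + d) * p * (a + d) ≤ p - algebraMap ℝ R (1 / 2) := by
  nontriviality R
  have hp_sa : IsSelfAdjoint p := .of_nonneg hp
  have hp_norm : 1 ≤ ‖p‖ := one_le_norm_of_one_le (one_le_of_one_add_star_mul_mul_le hp hap)
  set t : ℝ := (6 * ‖p‖)⁻¹ with ht_def
  have ht : 0 < t := by positivity
  have hcoeff : t * ‖p‖ - (1 + t) + (1 + t⁻¹) * (‖p‖ * ‖d‖ ^ 2) ≤ -(1 / 2) := by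
    have htp : t * ‖p‖ = 1 / 6 := by rw [ht_def]; field_simp
    have hquad := one_add_mul_mul_sq_le hp_norm (norm_nonneg d) hd
    rw [htp, ht_def, inv_inv, ← ht_def]
    linarith
  calc star (a + d) * p * (a + d)
      ≤ (1 + t) • (star a * p * a) + (1 + t⁻¹) • (star d * p * d) :=
        star_add_mul_mul_add_le hp a d ht
    _ ≤ (1 + t) • (p - 1) + (1 + t⁻¹) • algebraMap ℝ R (‖p‖ * ‖d‖ ^ 2) := by
        gcongr
        · exact le_sub_iff_add_le'.2 hap
        · exact star_mul_mul_le_algebraMap_norm_mul_norm_sq hp_sa d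
    _ = p + t • p + algebraMap ℝ R (-(1 + t) + (1 + t⁻¹) * (‖p‖ * ‖d‖ ^ 2)) := by
        simp only [Algebra.algebraMap_eq_smul_one]
        module
    _ ≤ p + t • algebraMap ℝ R ‖p‖
          + algebraMap ℝ R (-(1 + t) + (1 + t⁻¹) * (‖p‖ * ‖d‖ ^ 2)) := by
        gcongr
        exact le_algebraMap_norm_of_isSelfAdjoint hp_sa
    _ = p + algebraMap ℝ R (t * ‖p‖ - (1 + t) + (1 + t⁻¹) * (‖p‖ * ‖d‖ ^ 2)) := by
        simp only [Algebra.algebraMap_eq_smul_one]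
        module
    _ ≤ p + algebraMap ℝ R (-(1 / 2)) := by gcongr
    _ = p - algebraMap ℝ R (1 / 2) := by rw [map_neg, sub_eq_add_neg]

theorem star_add_mul_mul_add_le_smul {a p d : R} (hp : 0 ≤ p) (hap : 1 + star a * p * a ≤ p)
    (hd : ‖d‖ ≤ 1 / (6 * ‖p‖ ^ 2)) :
    star (a + d) * p * (a + d) ≤ (1 - 1 / (2 * ‖p‖)) • p := by
  calc star (a + d) * p * (a + d) ≤ p - algebraMap ℝ R (1 / 2) :=
        star_add_mul_mul_add_le_sub_algebraMap_half hp hap hd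
    _ ≤ p - (1 / (2 * ‖p‖)) • p :=
        sub_le_sub_left (norm_smul_le_algebraMap_half (.of_nonneg hp)) p
    _ = (1 - 1 / (2 * ‖p‖)) • p := by rw [sub_smul, one_smul]

theorem stability_margin_general {a p d : R} (ha : Tendsto (a ^ ·) atTop (𝓝 0))
    (hap : 1 + star a * p * a ≤ p) (hd : ‖d‖ ≤ 1 / (6 * ‖p‖ ^ 2)) :
    (∀ j : ℕ, star (a + d) ^ j * p * (a + d) ^ j ≤ (1 - 1 / (2 * ‖p‖)) ^ j • p) ∧
      Tendsto ((a + d) ^ ·) atTop (𝓝 0) := by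
  rcases subsingleton_or_nontrivial R with _ | _
  · exact ⟨fun _ ↦ (Subsingleton.elim _ _).le,
      tendsto_const_nhds.congr fun _ ↦ Subsingleton.elim _ _⟩
  have := orderClosedTopology_of_isometricContinuousFunctionalCalculus (R := R)
  have hp : 0 ≤ p := nonneg_of_star_mul_mul_le ha ((le_add_of_nonneg_left zero_le_one).trans hap)
  have hp_one : 1 ≤ p := one_le_of_one_add_star_mul_mul_le hp hap
  have hp_norm : 1 ≤ ‖p‖ := one_le_norm_of_one_le hp_one
  have hrate_nonneg : 0 ≤ 1 - 1 / (2 * ‖p‖) := by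
    rw [sub_nonneg, div_le_one] <;> linarith
  have hrate_lt_one : 1 - 1 / (2 * ‖p‖) < 1 := sub_lt_self 1 (by positivity)
  have hstep := star_add_mul_mul_add_le_smul hp hap hd
  exact ⟨star_pow_mul_mul_pow_le_smul hrate_nonneg hstep,
    tendsto_pow_of_star_mul_mul_le_smul hp_one hrate_nonneg hrate_lt_one hstep⟩

end RealCStarAlgebra

section BanachAlgebra

variable {B : Type*} [NormedRing B] [NormedAlgebra ℂ B] [CompleteSpace B]

theorem spectralRadius_lt_one_of_forall_norm_lt_one_s7 {b : B} (h : ∀ μ ∈ spectrum ℂ b, ‖μ‖ < 1) :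
    spectralRadius ℂ b < 1 := by
  rcases subsingleton_or_nontrivial B with _ | _
  · simp
  · exact spectrum.spectralRadius_lt_of_forall_lt (r := 1) b h

theorem tendsto_pow_of_spectralRadius_lt_one {b : B} (h : spectralRadius ℂ b < 1) :
    Tendsto (b ^ ·) atTop (𝓝 0) := by
  obtain ⟨r, hbr, hr⟩ := ENNReal.lt_iff_exists_nnreal_btwn.1 h
  have hroot : ∀ᶠ n : ℕ in atTop, (‖b ^ n‖₊ : ENNReal) ^ (1 / n : ℝ) < r :=
    (spectrum.pow_nnnorm_pow_one_div_tendsto_nhds_spectralRadius b).eventually_lt_const hbr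
  have hpow : ∀ᶠ n : ℕ in atTop, ‖b ^ n‖ ≤ (r : ℝ) ^ n := by
    filter_upwards [hroot, eventually_gt_atTop 0] with n hn hn_pos
    rw [one_div, ENNReal.rpow_inv_lt_iff (by positivity), ENNReal.rpow_natCast] at hn
    exact_mod_cast hn.le
  exact squeeze_zero_norm' hpow
    (tendsto_pow_atTop_nhds_zero_of_lt_one r.coe_nonneg (by exact_mod_cast hr))

theorem tendsto_pow_iff_forall_mem_spectrum_norm_lt_one {b : B} :
    Tendsto (b ^ ·) atTop (𝓝 0) ↔ ∀ μ ∈ spectrum ℂ b, ‖μ‖ < 1 := by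
  refine ⟨fun h μ hμ ↦ ?_, fun h ↦
    tendsto_pow_of_spectralRadius_lt_one (spectralRadius_lt_one_of_forall_norm_lt_one_s7 h)⟩
  have hle (n : ℕ) : ‖‖μ‖ ^ n‖ ≤ ‖b ^ n‖ * ‖(1 : B)‖ := by
    simpa using spectrum.norm_le_norm_mul_of_mem (spectrum.pow_mem_pow b n hμ)
  have hlim : Tendsto (‖μ‖ ^ ·) atTop (𝓝 0) :=
    squeeze_zero_norm hle (by simpa using h.norm.mul_const ‖(1 : B)‖)
  simpa using tendsto_pow_atTop_nhds_zero_iff.1 hlim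

end BanachAlgebra

section RealMatrix

open scoped MatrixOrder Matrix.Norms.L2Operator

theorem opNorm_eq_norm {p q : ℕ} (M : Matrix (Fin p) (Fin q) ℝ) : opNorm M = ‖M‖ := rfl

theorem isStable_iff_tendsto_pow {n : ℕ} {M : Matrix (Fin n) (Fin n) ℝ} :
    IsStable M ↔ Tendsto (M ^ ·) atTop (𝓝 0) := by
  have hmap (j : ℕ) : (M.map Complex.ofReal) ^ j = (M ^ j).map Complex.ofReal :=
    (map_pow Complex.ofRealHom.mapMatrix M j).symm
  have hemb : IsInducing fun N : Matrix (Fin n) (Fin n) ℝ ↦ N.map Complex.ofReal :=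
    .piMap fun _ ↦ .piMap fun _ ↦ Complex.isometry_ofReal.isEmbedding.isInducing
  rw [IsStable, ← tendsto_pow_iff_forall_mem_spectrum_norm_lt_one, hemb.tendsto_nhds_iff]
  simp [Function.comp_def, hmap]

end RealMatrix

/-- Stability margin: if `A` is stable, `Q ⪰ I`, `P = Q + AᵀPA` and
`‖Δ‖_op ≤ 1/(6‖P‖_op²)`, then `((A+Δ)ᵀ)ʲ P (A+Δ)ʲ ⪯ (1 - 1/(2‖P‖_op))ʲ P` for all `j`,
and in particular `A + Δ` is stable. -/
theorem stability_margin {d : ℕ}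
    (A Q P Δ : Matrix (Fin d) (Fin d) ℝ)
    (hA : IsStable A) (hQ : (Q - 1).PosSemidef)
    (hP : P = Q + Aᵀ * P * A)
    (hΔ : opNorm Δ ≤ 1 / (6 * opNorm P ^ 2)) :
    (∀ j : ℕ,
      ((1 - 1 / (2 * opNorm P)) ^ j • P - ((A + Δ)ᵀ) ^ j * P * (A + Δ) ^ j).PosSemidef)
    ∧ IsStable (A + Δ) := by
  simp only [isStable_iff_tendsto_pow, opNorm_eq_norm] at hA hΔ ⊢
  open scoped MatrixOrder Matrix.Norms.L2Operator in
  exact stability_margin_general hA ((add_le_add_left hQ _).trans_eq hP.symm) hΔ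
end

section
/- Under the hypotheses of the trajectory-decay lemma (G(x,u) = A x + B u + f(x,u) with ‖f(x,u)‖ ≤ β(‖x‖² + ‖u‖²) and ‖Df(x,u)‖_op ≤ β(‖x‖ + ‖u‖) for ‖x‖ + ‖u‖ ≤ r_nl; γ ∈ (0,1]; Q ⪰ I, R ⪰ I; √γ·(A+BK) stable with Lyapunov solution P; trajectory x_{t+1} = √γ·G(x_t, Kx_t); V₀ := x₀ᵀ P x₀ ≤ r_nl²/(4β²‖P‖_op³)), for all t ≥ 0: ‖f(x_t, K x_t)‖ ≤ β(1 + ‖K‖_op²) · V₀ · (1 − 1/(2‖P‖_op))^t, and ‖Df(x_t, K x_t)‖_op ≤ β(1 + ‖K‖_op) · V₀^{1/2} · (1 − 1/(2‖P‖_op))^{t/2}. -/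
open Matrix

/-- Euclidean norm of a vector in `ℝ^n`. -/
noncomputable def evnorm {n : ℕ} (x : Fin n → ℝ) : ℝ :=
  ‖(WithLp.equiv 2 (Fin n → ℝ)).symm x‖

/-- `P_{K,γ} = Σ_t γ^t ((A+BK)^t)ᵀ (Q + KᵀRK) (A+BK)^t`, the solution of the discounted
Lyapunov equation when `√γ (A+BK)` is stable. -/
noncomputable def lyapP {d m : ℕ} (A : Matrix (Fin d) (Fin d) ℝ) (B : Matrix (Fin d) (Fin m) ℝ)
    (Q : Matrix (Fin d) (Fin d) ℝ) (R : Matrix (Fin m) (Fin m) ℝ)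
    (K : Matrix (Fin m) (Fin d) ℝ) (γ : ℝ) : Matrix (Fin d) (Fin d) ℝ :=
  ∑' t : ℕ, γ ^ t • (((A + B * K) ^ t)ᵀ * (Q + Kᵀ * R * K) * (A + B * K) ^ t)

open RealInnerProductSpace

/-- The nonlinear remainder `f(x,u) = G(x,u) - Ax - Bu`. -/
noncomputable def remainder {d m : ℕ}
    (G : EuclideanSpace ℝ (Fin d) × EuclideanSpace ℝ (Fin m) → EuclideanSpace ℝ (Fin d))
    (A : Matrix (Fin d) (Fin d) ℝ) (B : Matrix (Fin d) (Fin m) ℝ) :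
    EuclideanSpace ℝ (Fin d) × EuclideanSpace ℝ (Fin m) → EuclideanSpace ℝ (Fin d) :=
  fun p => G p - Matrix.toEuclideanLin A p.1 - Matrix.toEuclideanLin B p.2

/-!
Write `V z = ⟪z, P z⟫` and `s = ‖z‖² + ‖K z‖²`. Since `Q, R ⪰ I`, the cost-to-go `V` satisfies
`V (M z) ≤ V z - s` along the damped closed loop `M`, whereas `V z ≤ ‖P‖ s`. The remainder is
quadratic, of norm at most `β s`, so on the sublevel set `4 β² ‖P‖³ V ≤ 1` a Young inequality for
the form `V`, with weight `s / (‖P‖ V z)`, shows that it destroys at most half of the linear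
contraction: `V` shrinks by the factor `1 - 1 / (2 ‖P‖)` at each step. The trajectory therefore
never leaves the sublevel set, where the bounds on the remainder apply, and `‖x t‖² ≤ V (x t)`
decays geometrically.
-/

section QuadraticForm

variable {E : Type*} [NormedAddCommGroup E] [InnerProductSpace ℝ E]

theorem real_inner_map_self_le (T : E →L[ℝ] E) (z : E) : ⟪z, T z⟫ ≤ ‖T‖ * ‖z‖ ^ 2 :=
  calc ⟪z, T z⟫ ≤ ‖z‖ * ‖T z‖ := real_inner_le_norm z (T z)
    _ ≤ ‖z‖ * (‖T‖ * ‖z‖) := by gcongr; exact T.le_opNorm z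
    _ = ‖T‖ * ‖z‖ ^ 2 := by ring

theorem inner_map_add_self_le_of_nonneg {T : E →ₗ[ℝ] E} (hT : ∀ z, 0 ≤ ⟪z, T z⟫) (y w : E) {l : ℝ}
    (hl : 0 < l) :
    ⟪y + w, T (y + w)⟫ ≤ (1 + l) * (⟪y, T y⟫ + ⟪w, T w⟫ / l) := by
  have expand : ⟪l • y - w, T (l • y - w)⟫ + l * ⟪y + w, T (y + w)⟫ =
      l * ((1 + l) * (⟪y, T y⟫ + ⟪w, T w⟫ / l)) := by
    simp only [map_add, map_sub, map_smul, inner_add_left, inner_add_right, inner_sub_left,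
      inner_sub_right, real_inner_smul_left, real_inner_smul_right]
    field_simp
    ring
  refine le_of_mul_le_mul_left ?_ hl
  linarith [hT (l • y - w)]

theorem inner_map_self_le_of_norm_le_mul {T : E →L[ℝ] E} (hT : 0 < ‖T‖) {β s V : ℝ} (hV : 0 < V)
    (hVβ : V * (4 * β ^ 2 * ‖T‖ ^ 3) ≤ 1) {w : E} (hw : ‖w‖ ≤ β * s) :
    ⟪w, T w⟫ ≤ (s / V * (1 / ‖T‖)) ^ 2 / 4 * V :=
  calc ⟪w, T w⟫ ≤ ‖T‖ * ‖w‖ ^ 2 := real_inner_map_self_le T w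
    _ ≤ ‖T‖ * (β * s) ^ 2 := by gcongr
    _ = V * (4 * β ^ 2 * ‖T‖ ^ 3) * ((s / V * (1 / ‖T‖)) ^ 2 / 4 * V) := by field_simp
    _ ≤ (s / V * (1 / ‖T‖)) ^ 2 / 4 * V := mul_le_of_le_one_left (by positivity) hVβ

end QuadraticForm

theorem one_add_mul_mul_le_one_sub_half {q σ : ℝ} (hq : 0 ≤ q) (hqσ : q ≤ σ) (hσ : σ ≤ 1) :
    (1 + σ * q) * (1 - σ + σ * q / 4) ≤ 1 - q / 2 := by
  have cubic : σ * (5 / 4 - σ) + σ ^ 3 / 4 + 1 / 2 ≤ 1 := by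
    have : 0 ≤ (1 - σ) ^ 2 * (2 - σ) := mul_nonneg (sq_nonneg _) (by linarith)
    linarith
  have hσq : σ ^ 2 * q ≤ σ ^ 2 * σ := by gcongr
  have bracket : σ * (5 / 4 - σ) + σ ^ 2 * q / 4 + 1 / 2 ≤ 1 := by linarith
  linarith [mul_le_mul_of_nonneg_left bracket hq]

theorem one_add_mul_sub_add_le_contraction {p s V : ℝ} (hp : 0 < p) (hs : 0 < s) (hsV : s ≤ V)
    (hVs : V ≤ p * s) :
    (1 + s / V * (1 / p)) * (V - s + (s / V * (1 / p)) ^ 2 / 4 * V / (s / V * (1 / p))) ≤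
      (1 - 1 / (2 * p)) * V := by
  have hV : 0 < V := hs.trans_le hsV
  have hqσ : 1 / p ≤ s / V := by
    rw [div_le_div_iff₀ hp hV]
    linarith
  calc (1 + s / V * (1 / p)) * (V - s + (s / V * (1 / p)) ^ 2 / 4 * V / (s / V * (1 / p)))
      = (1 + s / V * (1 / p)) * (1 - s / V + s / V * (1 / p) / 4) * V := by field_simp
    _ ≤ (1 - 1 / p / 2) * V := by
      gcongr
      exact one_add_mul_mul_le_one_sub_half (by positivity) hqσ ((div_le_one hV).2 hsV)
    _ = (1 - 1 / (2 * p)) * V := by rw [div_div, mul_comm p]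

theorem hasSum_orbit_eq_add {α : Type*} {T : α → α} {g V : α → ℝ}
    (h : ∀ z, HasSum (fun t : ℕ ↦ g (T^[t] z)) (V z)) (z : α) : V z = g z + V (T z) :=
  (h z).unique (HasSum.zero_add (f := fun t ↦ g (T^[t] z)) (h (T z)))

/-- `P` is a Lyapunov operator for the closed loop `M` under the feedback `K`: as quadratic forms,
`P ⪰ 0` and `Mᵀ P M + I + Kᵀ K ⪯ P`. The solution of the Lyapunov equation with costs `Q, R ⪰ I`
has this property. Only forms are compared, so `P` is not assumed to be symmetric. -/
structure IsLyapunov {E F : Type*} [NormedAddCommGroup E] [InnerProductSpace ℝ E]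
    [NormedAddCommGroup F] [NormedSpace ℝ F] (P M : E →L[ℝ] E) (K : E →L[ℝ] F) : Prop where
  nonneg : ∀ z, 0 ≤ ⟪z, P z⟫
  decrease : ∀ z, ⟪M z, P (M z)⟫ + (‖z‖ ^ 2 + ‖K z‖ ^ 2) ≤ ⟪z, P z⟫

namespace IsLyapunov

variable {E F : Type*} [NormedAddCommGroup E] [InnerProductSpace ℝ E] [NormedAddCommGroup F]
  [NormedSpace ℝ F] {P M : E →L[ℝ] E} {K : E →L[ℝ] F}

theorem of_hasSum_orbit {g : E → ℝ} (hg : ∀ z, ‖z‖ ^ 2 + ‖K z‖ ^ 2 ≤ g z)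
    (hP : ∀ z, HasSum (fun t : ℕ ↦ g (M^[t] z)) ⟪z, P z⟫) : IsLyapunov P M K where
  nonneg z := (hP z).nonneg fun _ ↦ (by positivity : (0 : ℝ) ≤ _).trans (hg _)
  decrease z := by linarith [hasSum_orbit_eq_add hP z, hg z]

theorem norm_sq_add_norm_sq_le (h : IsLyapunov P M K) (z : E) :
    ‖z‖ ^ 2 + ‖K z‖ ^ 2 ≤ ⟪z, P z⟫ := by
  linarith [h.decrease z, h.nonneg (M z)]

theorem norm_sq_le (h : IsLyapunov P M K) (z : E) : ‖z‖ ^ 2 ≤ ⟪z, P z⟫ := by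
  linarith [h.norm_sq_add_norm_sq_le z, sq_nonneg ‖K z‖]

theorem one_le_opNorm (h : IsLyapunov P M K) {z : E} (hz : z ≠ 0) : 1 ≤ ‖P‖ := by
  have : 0 < ‖z‖ ^ 2 := by positivity
  refine le_of_mul_le_mul_right ?_ this
  simpa using (h.norm_sq_le z).trans (real_inner_map_self_le P z)

theorem contractionFactor_mem_Icc (h : IsLyapunov P M K) :
    1 - 1 / (2 * ‖P‖) ∈ Set.Icc (0 : ℝ) 1 := by
  rcases subsingleton_or_nontrivial E with _ | _
  · simp [Subsingleton.elim P 0]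
  · obtain ⟨z, hz⟩ := exists_ne (0 : E)
    have hP : 1 ≤ ‖P‖ := h.one_le_opNorm hz
    have : 1 / (2 * ‖P‖) ≤ 1 := by
      rw [div_le_one (by positivity)]
      linarith
    exact ⟨sub_nonneg.2 this, sub_le_self _ (by positivity)⟩

theorem norm_add_norm_le_of_inner_le (h : IsLyapunov P M K) {β r : ℝ} (hβ : 1 ≤ β) (hr : 0 ≤ r)
    {z : E} (hz : ⟪z, P z⟫ ≤ r ^ 2 / (4 * β ^ 2 * ‖P‖ ^ 3)) : ‖z‖ + ‖K z‖ ≤ r := by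
  rcases eq_or_ne z 0 with rfl | hz0
  · simpa using hr
  have hP : 1 ≤ ‖P‖ := h.one_le_opNorm hz0
  have hden : 2 ≤ 4 * β ^ 2 * ‖P‖ ^ 3 := by
    linarith [one_le_mul_of_one_le_of_one_le (one_le_pow₀ hβ : 1 ≤ β ^ 2)
      (one_le_pow₀ hP : 1 ≤ ‖P‖ ^ 3)]
  refine le_of_sq_le_sq ?_ hr
  calc (‖z‖ + ‖K z‖) ^ 2 ≤ 2 * (‖z‖ ^ 2 + ‖K z‖ ^ 2) := add_sq_le
    _ ≤ 2 * (r ^ 2 / (4 * β ^ 2 * ‖P‖ ^ 3)) := by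
      gcongr; exact (h.norm_sq_add_norm_sq_le z).trans hz
    _ ≤ 2 * (r ^ 2 / 2) := by gcongr
    _ = r ^ 2 := by ring

theorem inner_map_add_le_contractionFactor_mul (h : IsLyapunov P M K) {β : ℝ} {z w : E}
    (hz : ⟪z, P z⟫ * (4 * β ^ 2 * ‖P‖ ^ 3) ≤ 1) (hw : ‖w‖ ≤ β * (‖z‖ ^ 2 + ‖K z‖ ^ 2)) :
    ⟪M z + w, P (M z + w)⟫ ≤ (1 - 1 / (2 * ‖P‖)) * ⟪z, P z⟫ := by
  rcases eq_or_ne z 0 with rfl | hz0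
  · have : w = 0 := by simpa using hw
    simp [this]
  have hP : 0 < ‖P‖ := one_pos.trans_le (h.one_le_opNorm hz0)
  have hs : 0 < ‖z‖ ^ 2 + ‖K z‖ ^ 2 := by positivity
  have hsV := h.norm_sq_add_norm_sq_le z
  have hVs : ⟪z, P z⟫ ≤ ‖P‖ * (‖z‖ ^ 2 + ‖K z‖ ^ 2) :=
    (real_inner_map_self_le P z).trans (by gcongr; exact le_add_of_nonneg_right (sq_nonneg _))
  have hMz : ⟪M z, P (M z)⟫ ≤ ⟪z, P z⟫ - (‖z‖ ^ 2 + ‖K z‖ ^ 2) := by linarith [h.decrease z]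
  have hV : 0 < ⟪z, P z⟫ := hs.trans_le hsV
  have hPw := inner_map_self_le_of_norm_le_mul hP hV hz hw
  set s := ‖z‖ ^ 2 + ‖K z‖ ^ 2
  set V := ⟪z, P z⟫
  set l := s / V * (1 / ‖P‖)
  have hl : 0 < l := by positivity
  calc ⟪M z + w, P (M z + w)⟫ ≤ (1 + l) * (⟪M z, P (M z)⟫ + ⟪w, P w⟫ / l) :=
        inner_map_add_self_le_of_nonneg (T := P.toLinearMap) h.nonneg (M z) w hl
    _ ≤ (1 + l) * (V - s + l ^ 2 / 4 * V / l) := by gcongr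
    _ ≤ (1 - 1 / (2 * ‖P‖)) * V := one_add_mul_sub_add_le_contraction hP hs hsV hVs

theorem inner_trajectory_le_mul_pow (h : IsLyapunov P M K) {β r : ℝ} (hβ : 1 ≤ β) (hr0 : 0 ≤ r)
    (hr1 : r ≤ 1) {x w : ℕ → E} (hx : ∀ t, x (t + 1) = M (x t) + w t)
    (hw : ∀ t, ‖x t‖ + ‖K (x t)‖ ≤ r → ‖w t‖ ≤ β * (‖x t‖ ^ 2 + ‖K (x t)‖ ^ 2))
    (hx0 : ⟪x 0, P (x 0)⟫ ≤ r ^ 2 / (4 * β ^ 2 * ‖P‖ ^ 3)) (t : ℕ) :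
    ⟪x t, P (x t)⟫ ≤ ⟪x 0, P (x 0)⟫ * (1 - 1 / (2 * ‖P‖)) ^ t := by
  obtain ⟨hρ0, hρ1⟩ := h.contractionFactor_mem_Icc
  induction t with
  | zero => simp
  | succ t ih =>
    have hxt : ⟪x t, P (x t)⟫ ≤ r ^ 2 / (4 * β ^ 2 * ‖P‖ ^ 3) :=
      (ih.trans (mul_le_of_le_one_right (h.nonneg _) (pow_le_one₀ hρ0 hρ1))).trans hx0
    have hsmall : ⟪x t, P (x t)⟫ * (4 * β ^ 2 * ‖P‖ ^ 3) ≤ 1 :=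
      (mul_le_of_le_div₀ (sq_nonneg r) (by positivity) hxt).trans (pow_le_one₀ hr0 hr1)
    calc ⟪x (t + 1), P (x (t + 1))⟫ ≤ (1 - 1 / (2 * ‖P‖)) * ⟪x t, P (x t)⟫ := by
          rw [hx]
          exact h.inner_map_add_le_contractionFactor_mul hsmall
            (hw t (h.norm_add_norm_le_of_inner_le hβ hr0 hxt))
      _ ≤ (1 - 1 / (2 * ‖P‖)) * (⟪x 0, P (x 0)⟫ * (1 - 1 / (2 * ‖P‖)) ^ t) := by gcongr
      _ = ⟪x 0, P (x 0)⟫ * (1 - 1 / (2 * ‖P‖)) ^ (t + 1) := by ring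

end IsLyapunov

section Stability

open Filter

theorem eventually_nnnorm_pow_le_of_spectralRadius_lt {𝔸 : Type*} [NormedRing 𝔸]
    [NormedAlgebra ℂ 𝔸] [CompleteSpace 𝔸] {a : 𝔸} {r : NNReal} (h : spectralRadius ℂ a < r) :
    ∀ᶠ k : ℕ in atTop, ‖a ^ k‖₊ ≤ r ^ k := by
  have gelfand := spectrum.pow_nnnorm_pow_one_div_tendsto_nhds_spectralRadius a
  filter_upwards [gelfand.eventually_lt_const h, eventually_gt_atTop 0] with k hk hk0
  have hroot : ((‖a ^ k‖₊ : ENNReal) ^ (1 / k : ℝ)) ^ (k : ℝ) ≤ (r : ENNReal) ^ (k : ℝ) :=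
    ENNReal.rpow_le_rpow hk.le k.cast_nonneg
  rw [← ENNReal.rpow_mul, one_div_mul_cancel (by positivity), ENNReal.rpow_one,
    ENNReal.rpow_natCast] at hroot
  exact_mod_cast hroot

-- The Frobenius norm is invariant under entrywise complexification and under transposition.
attribute [local instance] Matrix.frobeniusNormedRing Matrix.frobeniusNormedAlgebra
  Matrix.frobeniusNormedAddCommGroup Matrix.frobeniusNormedSpace

theorem IsStable.exists_eventually_frobenius_norm_pow_le {n : ℕ} [NeZero n]
    {M : Matrix (Fin n) (Fin n) ℝ} (h : IsStable M) :
    ∃ r : NNReal, r < 1 ∧ ∀ᶠ k : ℕ in atTop, ‖M ^ k‖ ≤ r ^ k := by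
  have : CompleteSpace (Matrix (Fin n) (Fin n) ℂ) := FiniteDimensional.complete ℂ _
  have hρ : spectralRadius ℂ (M.map Complex.ofReal) < (1 : NNReal) :=
    spectrum.spectralRadius_lt_of_forall_lt _ fun μ hμ ↦ h μ hμ
  obtain ⟨r, hMr, hr⟩ := ENNReal.lt_iff_exists_nnreal_btwn.1 hρ
  refine ⟨r, by exact_mod_cast hr, ?_⟩
  filter_upwards [eventually_nnnorm_pow_le_of_spectralRadius_lt hMr] with k hk
  have hpow : (M.map Complex.ofReal) ^ k = (M ^ k).map Complex.ofReal :=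
    (Matrix.map_pow M Complex.ofRealHom k).symm
  rw [hpow, Matrix.frobenius_nnnorm_map_eq _ _ fun a ↦ Complex.nnnorm_real a] at hk
  exact_mod_cast hk

theorem IsStable.summable_transpose_pow_mul_mul_pow {n : ℕ} {M : Matrix (Fin n) (Fin n) ℝ}
    (h : IsStable M) (S : Matrix (Fin n) (Fin n) ℝ) :
    Summable fun t : ℕ ↦ (M ^ t)ᵀ * S * M ^ t := by
  rcases eq_or_ne n 0 with rfl | hn
  · simp [Subsingleton.elim _ (0 : Matrix (Fin 0) (Fin 0) ℝ)]
  have : NeZero n := ⟨hn⟩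
  have : CompleteSpace (Matrix (Fin n) (Fin n) ℝ) := FiniteDimensional.complete ℝ _
  obtain ⟨r, hr, hM⟩ := h.exists_eventually_frobenius_norm_pow_le
  have hgeom : Summable fun t : ℕ ↦ ‖S‖ * ((r : ℝ) ^ 2) ^ t :=
    (summable_geometric_of_lt_one (by positivity)
      (pow_lt_one₀ r.coe_nonneg (by exact_mod_cast hr) two_ne_zero)).mul_left _
  refine hgeom.of_norm_bounded_eventually_nat ?_
  filter_upwards [hM] with t ht
  calc ‖(M ^ t)ᵀ * S * M ^ t‖ ≤ ‖(M ^ t)ᵀ‖ * ‖S‖ * ‖M ^ t‖ := norm_mul₃_le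
    _ = ‖M ^ t‖ * ‖S‖ * ‖M ^ t‖ := by rw [Matrix.frobenius_norm_transpose]
    _ ≤ r ^ t * ‖S‖ * r ^ t := by gcongr
    _ = ‖S‖ * ((r : ℝ) ^ 2) ^ t := by ring

end Stability

section LyapunovSeries

theorem inner_toEuclideanLin_transpose_mul_mul {n k : ℕ} (S : Matrix (Fin n) (Fin n) ℝ)
    (N : Matrix (Fin n) (Fin k) ℝ) (z : EuclideanSpace ℝ (Fin k)) :
    ⟪z, toEuclideanLin (Nᵀ * S * N) z⟫ =
      ⟪toEuclideanLin N z, toEuclideanLin S (toEuclideanLin N z)⟫ := by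
  rw [← conjTranspose_eq_transpose_of_trivial, toLpLin_mul 2 2 2, toLpLin_mul 2 2 2,
    toEuclideanLin_conjTranspose_eq_adjoint, LinearMap.comp_apply, LinearMap.comp_apply,
    LinearMap.adjoint_inner_right]

theorem norm_sq_le_inner_toEuclideanLin {n : ℕ} {T : Matrix (Fin n) (Fin n) ℝ}
    (hT : (T - 1).PosSemidef) (z : EuclideanSpace ℝ (Fin n)) :
    ‖z‖ ^ 2 ≤ ⟪z, toEuclideanLin T z⟫ := by
  have := (isPositive_toEuclideanLin_iff.2 hT).inner_nonneg_right z
  simpa [inner_sub_right] using this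

variable {d m : ℕ} {A : Matrix (Fin d) (Fin d) ℝ} {B : Matrix (Fin d) (Fin m) ℝ}
  {Q : Matrix (Fin d) (Fin d) ℝ} {R : Matrix (Fin m) (Fin m) ℝ} {K : Matrix (Fin m) (Fin d) ℝ}
  {γ : ℝ}

theorem hasSum_inner_lyapP (hγ : 0 ≤ γ) (h : IsStable (√γ • (A + B * K)))
    (z : EuclideanSpace ℝ (Fin d)) :
    HasSum (fun t : ℕ ↦ ⟪(toEuclideanLin (√γ • (A + B * K)))^[t] z,
        toEuclideanLin (Q + Kᵀ * R * K) ((toEuclideanLin (√γ • (A + B * K)))^[t] z)⟫)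
      ⟪z, toEuclideanLin (lyapP A B Q R K γ) z⟫ := by
  set M := √γ • (A + B * K) with hM
  set S := Q + Kᵀ * R * K
  have hterm (t : ℕ) : γ ^ t • (((A + B * K) ^ t)ᵀ * S * (A + B * K) ^ t) =
      (M ^ t)ᵀ * S * M ^ t := by
    rw [hM, smul_pow, transpose_smul, Matrix.smul_mul, Matrix.smul_mul, Matrix.mul_smul, smul_smul,
      ← mul_pow, Real.mul_self_sqrt hγ]
  have hP : HasSum (fun t : ℕ ↦ (M ^ t)ᵀ * S * M ^ t) (lyapP A B Q R K γ) := by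
    rw [lyapP, tsum_congr hterm]
    exact (h.summable_transpose_pow_mul_mul_pow S).hasSum
  let form : Matrix (Fin d) (Fin d) ℝ →ₗ[ℝ] ℝ :=
    innerₛₗ ℝ z ∘ₗ LinearMap.applyₗ z ∘ₗ (toEuclideanLin (𝕜 := ℝ)).toLinearMap
  have hform : HasSum (fun t : ℕ ↦ ⟪z, toEuclideanLin ((M ^ t)ᵀ * S * M ^ t) z⟫)
      ⟪z, toEuclideanLin (lyapP A B Q R K γ) z⟫ :=
    hP.map form form.continuous_of_finiteDimensional
  simpa only [inner_toEuclideanLin_transpose_mul_mul, toLpLin_pow, Module.End.pow_apply] using hform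

theorem isLyapunov_lyapP (hQ : (Q - 1).PosSemidef) (hR : (R - 1).PosSemidef) (hγ : 0 ≤ γ)
    (h : IsStable (√γ • (A + B * K))) :
    IsLyapunov (toEuclideanLin (lyapP A B Q R K γ)).toContinuousLinearMap
      (√γ • ((toEuclideanLin A).toContinuousLinearMap +
        (toEuclideanLin B).toContinuousLinearMap ∘L (toEuclideanLin K).toContinuousLinearMap))
      (toEuclideanLin K).toContinuousLinearMap := by
  have hM : √γ • ((toEuclideanLin A).toContinuousLinearMap +
        (toEuclideanLin B).toContinuousLinearMap ∘L (toEuclideanLin K).toContinuousLinearMap) =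
      (toEuclideanLin (√γ • (A + B * K))).toContinuousLinearMap := by
    ext1 z
    simp [toLpLin_mul 2 2 2]
  rw [hM]
  refine .of_hasSum_orbit (g := fun z ↦ ⟪z, toEuclideanLin (Q + Kᵀ * R * K) z⟫)
    (fun z ↦ ?_) (fun z ↦ ?_)
  · rw [map_add, LinearMap.add_apply, inner_add_right, inner_toEuclideanLin_transpose_mul_mul]
    exact add_le_add (norm_sq_le_inner_toEuclideanLin hQ z) (norm_sq_le_inner_toEuclideanLin hR _)
  · simpa only [LinearMap.coe_toContinuousLinearMap'] using hasSum_inner_lyapP hγ h z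

end LyapunovSeries

theorem remainder_decay_along_trajectory_general {E F : Type*} [NormedAddCommGroup E]
    [InnerProductSpace ℝ E] [NormedAddCommGroup F] [NormedSpace ℝ F] {G f : E × F → E}
    (_hG : Differentiable ℝ G) {A : E →L[ℝ] E} {B : F →L[ℝ] E}
    (hGf : ∀ p, G p = A p.1 + B p.2 + f p) {β r : ℝ} (hβ : 1 ≤ β) (hr0 : 0 ≤ r) (hr1 : r ≤ 1)
    (hf : ∀ x u, ‖x‖ + ‖u‖ ≤ r → ‖f (x, u)‖ ≤ β * (‖x‖ ^ 2 + ‖u‖ ^ 2))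
    (hDf : ∀ x u, ‖x‖ + ‖u‖ ≤ r → ‖fderiv ℝ f (x, u)‖ ≤ β * (‖x‖ + ‖u‖))
    {c : ℝ} (hc : |c| ≤ 1) {K : E →L[ℝ] F} {P : E →L[ℝ] E}
    (hP : IsLyapunov P (c • (A + B ∘L K)) K) {x : ℕ → E}
    (hx : ∀ t, x (t + 1) = c • G (x t, K (x t)))
    (hx0 : ⟪x 0, P (x 0)⟫ ≤ r ^ 2 / (4 * β ^ 2 * ‖P‖ ^ 3)) (t : ℕ) :
    ‖f (x t, K (x t))‖
        ≤ β * (1 + ‖K‖ ^ 2) * ⟪x 0, P (x 0)⟫ * (1 - 1 / (2 * ‖P‖)) ^ t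
      ∧ ‖fderiv ℝ f (x t, K (x t))‖
        ≤ β * (1 + ‖K‖) * √⟪x 0, P (x 0)⟫ * √((1 - 1 / (2 * ‖P‖)) ^ t) := by
  obtain ⟨hρ0, hρ1⟩ := hP.contractionFactor_mem_Icc
  have hstep (t : ℕ) :
      x (t + 1) = (c • (A + B ∘L K)) (x t) + c • f (x t, K (x t)) := by
    simp [hx, hGf]
  have hw (t : ℕ) (ht : ‖x t‖ + ‖K (x t)‖ ≤ r) :
      ‖c • f (x t, K (x t))‖ ≤ β * (‖x t‖ ^ 2 + ‖K (x t)‖ ^ 2) := by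
    rw [norm_smul]
    exact (mul_le_of_le_one_left (norm_nonneg _) hc).trans (hf _ _ ht)
  have hV := hP.inner_trajectory_le_mul_pow hβ hr0 hr1 hstep hw hx0 t
  have hVx0 := hV.trans (mul_le_of_le_one_right (hP.nonneg _) (pow_le_one₀ hρ0 hρ1))
  have hreg := hP.norm_add_norm_le_of_inner_le hβ hr0 (hVx0.trans hx0)
  have hxt := (hP.norm_sq_le (x t)).trans hV
  have hK := K.le_opNorm (x t)
  have : 0 ≤ β := zero_le_one.trans hβ
  constructor
  · calc ‖f (x t, K (x t))‖ ≤ β * (‖x t‖ ^ 2 + ‖K (x t)‖ ^ 2) := hf _ _ hreg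
      _ ≤ β * (‖x t‖ ^ 2 + (‖K‖ * ‖x t‖) ^ 2) := by gcongr
      _ = β * (1 + ‖K‖ ^ 2) * ‖x t‖ ^ 2 := by ring
      _ ≤ β * (1 + ‖K‖ ^ 2) * (⟪x 0, P (x 0)⟫ * (1 - 1 / (2 * ‖P‖)) ^ t) := by gcongr
      _ = _ := by ring
  · calc ‖fderiv ℝ f (x t, K (x t))‖ ≤ β * (‖x t‖ + ‖K (x t)‖) := hDf _ _ hreg
      _ ≤ β * (‖x t‖ + ‖K‖ * ‖x t‖) := by gcongr
      _ = β * (1 + ‖K‖) * ‖x t‖ := by ring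
      _ ≤ β * (1 + ‖K‖) * √(⟪x 0, P (x 0)⟫ * (1 - 1 / (2 * ‖P‖)) ^ t) := by
        gcongr; exact Real.le_sqrt_of_sq_le hxt
      _ = _ := by rw [Real.sqrt_mul (hP.nonneg _), mul_assoc _ (√_)]

/-- Along a damped nonlinear trajectory started inside the Lyapunov sublevel set, both the
nonlinear remainder and its derivative decay geometrically. -/
theorem remainder_decay_along_trajectory {d m : ℕ}
    (G : EuclideanSpace ℝ (Fin d) × EuclideanSpace ℝ (Fin m) → EuclideanSpace ℝ (Fin d))
    (hG : ContDiff ℝ 1 G)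
    (A : Matrix (Fin d) (Fin d) ℝ) (B : Matrix (Fin d) (Fin m) ℝ)
    (Q : Matrix (Fin d) (Fin d) ℝ) (R : Matrix (Fin m) (Fin m) ℝ)
    (K : Matrix (Fin m) (Fin d) ℝ)
    (β rnl : ℝ) (hβ : 1 ≤ β) (hrnl0 : 0 < rnl) (hrnl1 : rnl ≤ 1)
    (hf : ∀ (x : EuclideanSpace ℝ (Fin d)) (u : EuclideanSpace ℝ (Fin m)),
      ‖x‖ + ‖u‖ ≤ rnl → ‖remainder G A B (x, u)‖ ≤ β * (‖x‖ ^ 2 + ‖u‖ ^ 2))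
    (hDf : ∀ (x : EuclideanSpace ℝ (Fin d)) (u : EuclideanSpace ℝ (Fin m)),
      ‖x‖ + ‖u‖ ≤ rnl → ‖fderiv ℝ (remainder G A B) (x, u)‖ ≤ β * (‖x‖ + ‖u‖))
    (γ : ℝ) (hγ : γ ∈ Set.Ioc (0 : ℝ) 1)
    (hQ : (Q - 1).PosSemidef) (hR : (R - 1).PosSemidef)
    (hstab : IsStable (Real.sqrt γ • (A + B * K)))
    (x : ℕ → EuclideanSpace ℝ (Fin d))
    (hstep : ∀ t : ℕ,
      x (t + 1) = Real.sqrt γ • G (x t, Matrix.toEuclideanLin K (x t)))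
    (hV0 : ⟪x 0, Matrix.toEuclideanLin (lyapP A B Q R K γ) (x 0)⟫
        ≤ rnl ^ 2 / (4 * β ^ 2 * opNorm (lyapP A B Q R K γ) ^ 3)) :
    ∀ t : ℕ,
      ‖remainder G A B (x t, Matrix.toEuclideanLin K (x t))‖
          ≤ β * (1 + opNorm K ^ 2)
              * ⟪x 0, Matrix.toEuclideanLin (lyapP A B Q R K γ) (x 0)⟫
              * (1 - 1 / (2 * opNorm (lyapP A B Q R K γ))) ^ t
      ∧ ‖fderiv ℝ (remainder G A B) (x t, Matrix.toEuclideanLin K (x t))‖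
          ≤ β * (1 + opNorm K)
              * Real.sqrt ⟪x 0, Matrix.toEuclideanLin (lyapP A B Q R K γ) (x 0)⟫
              * Real.sqrt ((1 - 1 / (2 * opNorm (lyapP A B Q R K γ))) ^ t) := by
  exact remainder_decay_along_trajectory_general (hG.differentiable one_ne_zero)
    (A := (toEuclideanLin A).toContinuousLinearMap) (B := (toEuclideanLin B).toContinuousLinearMap)
    (fun p ↦ by simp [remainder]) hβ hrnl0.le hrnl1 hf hDf
    (by simpa [abs_of_nonneg (Real.sqrt_nonneg γ)] using hγ.2)
    (isLyapunov_lyapP hQ hR hγ.1.le hstab) hstep hV0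
end
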